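/- Let m and n be finite index types and let ρ, τ : Matrix (m × n) (m × n) ℂ. Suppose both marginals of ρ and τ agree: for all i, i' : m, ∑_{j : n} ρ((i,j),(i',j)) = ∑_{j : n} τ((i,j),(i',j)), and for all j, j' : n, ∑_{i : m} ρ((i,j),(i,j')) = ∑_{i : m} τ((i,j),(i,j')). Then for every local Hamiltonian of the form H = H_A ⊗ₖ 1 + 1 ⊗ₖ H_B with H_A : Matrix m m ℂ and H_B : Matrix n n ℂ, the energies agree: trace(H * ρ) = trace(H * τ). -/

import Mathlib

open Matrix
open scoped Kronecker

/-- If both marginals (partial traces over each tensor factor) of `ρ` and `τ` agree,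
then the energies with respect to any local Hamiltonian `H_A ⊗ₖ 1 + 1 ⊗ₖ H_B` agree. -/
theorem energy_eq_of_marginals_eq
    {m n : Type*} [Fintype m] [Fintype n] [DecidableEq m] [DecidableEq n]
    (ρ τ : Matrix (m × n) (m × n) ℂ)
    (h₁ : ∀ i i' : m, ∑ j : n, ρ (i, j) (i', j) = ∑ j : n, τ (i, j) (i', j))
    (h₂ : ∀ j j' : n, ∑ i : m, ρ (i, j) (i, j') = ∑ i : m, τ (i, j) (i, j')) :
    ∀ (H_A : Matrix m m ℂ) (H_B : Matrix n n ℂ),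
      ((H_A ⊗ₖ (1 : Matrix n n ℂ) + (1 : Matrix m m ℂ) ⊗ₖ H_B) * ρ).trace =
        ((H_A ⊗ₖ (1 : Matrix n n ℂ) + (1 : Matrix m m ℂ) ⊗ₖ H_B) * τ).trace := by
  intro H_A H_B
  have key : ∀ σ : Matrix (m × n) (m × n) ℂ,
      ((H_A ⊗ₖ (1 : Matrix n n ℂ) + (1 : Matrix m m ℂ) ⊗ₖ H_B) * σ).trace =
        (∑ i : m, ∑ i' : m, H_A i i' * ∑ j : n, σ (i', j) (i, j)) +
          ∑ j : n, ∑ j' : n, H_B j j' * ∑ i : m, σ (i, j') (i, j) := by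
    intro σ
    rw [Matrix.add_mul, Matrix.trace_add]
    congr 1
    · simp only [Matrix.trace, Matrix.diag_apply, Matrix.mul_apply, Fintype.sum_prod_type,
        Matrix.kroneckerMap_apply, Matrix.one_apply, mul_ite, mul_one, mul_zero, ite_mul,
        zero_mul, Finset.sum_ite_eq, Finset.mem_univ, if_true, Finset.mul_sum]
      exact Finset.sum_congr rfl fun i _ => Finset.sum_comm
    · rw [Matrix.trace, Fintype.sum_prod_type, Finset.sum_comm]
      refine Finset.sum_congr rfl fun j _ => ?_
      simp only [Matrix.diag_apply, Matrix.mul_apply, Fintype.sum_prod_type_right,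
        Matrix.kroneckerMap_apply, Matrix.one_apply, ite_mul, one_mul,
        zero_mul, Finset.sum_ite_eq, Finset.mem_univ, if_true, Finset.mul_sum]
      exact Finset.sum_comm
  rw [key ρ, key τ]
  simp only [h₁, h₂]
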